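/- Let A and B be unital complex C*-algebras and T : A → B a continuous unital algebra homomorphism satisfying the strong Riesz property. Then the set of generalized T-Riesz elements coincides with the set of polynomially T-Riesz elements: for every a ∈ A, there exists a finite set Ω ⊆ ℂ with σ_T(a) = ω_T(a) = β_T(a) = Ω if and only if there exists a nonzero polynomial P ∈ ℂ[X] with σ_B(T (P(a))) ⊆ {0}. -/

import Mathlib

/-!
The content is the inclusion `β_T(a) ⊆ σ_T(a)` when `σ_T(a)` is finite; the inclusions
`σ_T(a) ⊆ ω_T(a) ⊆ β_T(a)` hold for every homomorphism, and the spectral mapping theorem for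
polynomials says that `a` is polynomially `T`-Riesz exactly when `σ_T(a)` is finite.

Let `z ∉ σ_T(a) = Ω` with `Ω` finite. The interior of `σ(a)` is relatively clopen in the connected
unbounded set `Ωᶜ`: a point of `Ωᶜ` in its closure but not in it would be a frontier point of `σ(a)`
that is not isolated, against the strong Riesz property. As `σ(a)` is bounded, its interior does not
meet `Ωᶜ`, so `z` is not an accumulation point of `σ(a)` (`not_mem_acc_of_frontier`).

On a small circle around `z` the resolvent therefore defines the Riesz idempotent
`p = (2πi)⁻¹ ∮ (w - a)⁻¹ dw`. It is idempotent by the resolvent identity and Fubini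
(`riesz_idempotent`), and `T p = 0` by Cauchy's theorem, the resolvent of `T a` being holomorphic on
the disc. With `b = (2πi)⁻¹ ∮ (w - z)⁻¹ (w - a)⁻¹ dw` one gets `(z - a) b = b (z - a) = 1 - p`, so
`d = (z - a)(1 - p) + p` has the inverse `b (1 - p) + p`, and `c = (z - a - 1) p` completes the Browder
decomposition `z - a = c + d` (`exists_browder_decomposition`).
-/

/-! ### Circle integrals with values in a Banach space -/

open MeasureTheory Metric Set Complex Real in
lemma clm_circleIntegral {E F : Type*} [NormedAddCommGroup E] [NormedSpace ℂ E] [CompleteSpace E]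
    [NormedAddCommGroup F] [NormedSpace ℂ F] [CompleteSpace F] (L : E →L[ℂ] F) {f : ℂ → E}
    {z : ℂ} {r : ℝ} (hr : 0 ≤ r) (hf : ContinuousOn f (sphere z r)) :
    ∮ w in C(z, r), L (f w) = L (∮ w in C(z, r), f w) := by
  have h := (hf.circleIntegrable hr).out
  simp only [circleIntegral]
  rw [← L.intervalIntegral_comp_comm h]
  simp

open MeasureTheory Metric Set Complex Real in
lemma circleIntegral_swap {E : Type*} [NormedAddCommGroup E] [NormedSpace ℂ E]
    {f : ℂ → ℂ → E} {z : ℂ} {r s : ℝ} (hr : 0 ≤ r) (hs : 0 ≤ s)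
    (hf : ContinuousOn (Function.uncurry f) (sphere z r ×ˢ sphere z s)) :
    ∮ w in C(z, r), ∮ v in C(z, s), f w v = ∮ v in C(z, s), ∮ w in C(z, r), f w v := by
  simp only [circleIntegral, ← intervalIntegral.integral_smul]
  rw [intervalIntegral_intervalIntegral_swap]
  · simp only [smul_comm (deriv (circleMap z s) _)]
  · have hc : Continuous (fun p : ℝ × ℝ => f (circleMap z r p.1) (circleMap z s p.2)) := by
      refine hf.comp_continuous (f := fun p : ℝ × ℝ => (circleMap z r p.1, circleMap z s p.2))
        (by fun_prop) fun p => ⟨circleMap_mem_sphere _ hr _, circleMap_mem_sphere _ hs _⟩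
    have hc2 : Continuous (Function.uncurry fun x y : ℝ => deriv (circleMap z r) x •
        deriv (circleMap z s) y • f (circleMap z r x) (circleMap z s y)) := by
      simp only [Function.uncurry_def, deriv_circleMap]
      exact (by fun_prop : Continuous fun p : ℝ × ℝ => circleMap 0 r p.1 * I).smul
        ((by fun_prop : Continuous fun p : ℝ × ℝ => circleMap 0 s p.2 * I).smul hc)
    exact (hc2.continuousOn.integrableOn_compact (isCompact_uIcc.prod isCompact_uIcc)).mono_set
      (prod_mono uIoc_subset_uIcc uIoc_subset_uIcc)

/-! ### The resolvent and the Riesz idempotent -/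

section Resolvent

variable {A : Type*} [NormedRing A] [NormedAlgebra ℂ A] {a : A}

lemma sub_mul_resolvent {w : ℂ} (hw : w ∈ resolventSet ℂ a) :
    (algebraMap ℂ A w - a) * resolvent a w = 1 :=
  Ring.mul_inverse_cancel _ hw

lemma resolvent_mul_sub {w : ℂ} (hw : w ∈ resolventSet ℂ a) :
    resolvent a w * (algebraMap ℂ A w - a) = 1 :=
  Ring.inverse_mul_cancel _ hw

/-- The first resolvent identity, solved for the product of two resolvents. -/
lemma resolvent_mul_resolvent {w v : ℂ} (hw : w ∈ resolventSet ℂ a) (hv : v ∈ resolventSet ℂ a)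
    (hne : v ≠ w) : resolvent a w * resolvent a v =
      (v - w)⁻¹ • resolvent a w - (v - w)⁻¹ • resolvent a v := by
  have h : resolvent a w - resolvent a v = (v - w) • (resolvent a w * resolvent a v) := by
    calc resolvent a w - resolvent a v
        = resolvent a w * ((algebraMap ℂ A v - a) * resolvent a v)
          - (resolvent a w * (algebraMap ℂ A w - a)) * resolvent a v := by
          rw [sub_mul_resolvent hv, resolvent_mul_sub hw, mul_one, one_mul]
      _ = resolvent a w * algebraMap ℂ A (v - w) * resolvent a v := by
          rw [map_sub]; noncomm_ring
      _ = _ := by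
          rw [← Algebra.commutes, ← Algebra.smul_def, smul_mul_assoc]
  rw [← smul_sub, h, smul_smul, inv_mul_cancel₀ (sub_ne_zero.2 hne), one_smul]

lemma AlgHom.map_resolvent {B : Type*} [NormedRing B] [NormedAlgebra ℂ B] (T : A →ₐ[ℂ] B)
    {w : ℂ} (hw : w ∈ resolventSet ℂ a) : T (resolvent a w) = resolvent (T a) w := by
  have h1 : T (resolvent a w) * (algebraMap ℂ B w - T a) = 1 := by
    rw [← T.commutes, ← map_sub, ← map_mul, resolvent_mul_sub hw, map_one]
  have hw' : w ∈ resolventSet ℂ (T a) := AlgHom.mem_resolventSet_apply T hw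
  calc T (resolvent a w)
      = T (resolvent a w) * ((algebraMap ℂ B w - T a) * resolvent (T a) w) := by
        rw [sub_mul_resolvent hw', mul_one]
    _ = _ := by rw [← mul_assoc, h1, one_mul]

lemma Commute.resolvent_right {x : A} (hx : Commute x a) (w : ℂ) : Commute x (resolvent a w) := by
  have h : Commute x (algebraMap ℂ A w - a) :=
    Commute.sub_right (Algebra.commutes w x).symm hx
  by_cases hw : IsUnit (algebraMap ℂ A w - a)
  · obtain ⟨u, hu⟩ := hw
    rw [resolvent, ← hu, Ring.inverse_unit]
    exact Commute.units_inv_right (hu ▸ h)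
  · rw [resolvent, Ring.inverse_non_unit _ hw]
    exact Commute.zero_right x

variable [CompleteSpace A]

lemma continuousOn_resolvent {s : Set ℂ} (hs : s ⊆ resolventSet ℂ a) :
    ContinuousOn (resolvent a) s := fun _ hw =>
  (spectrum.hasDerivAt_resolvent_const_left (hs hw)).continuousAt.continuousWithinAt

open MeasureTheory Metric Set Complex Real

/-- The contour integral of the resolvent around an isolated spectral point (or a point of the
resolvent set) is, up to the factor `2πi`, idempotent. The second factor is moved to the larger circle
of radius `s`, so that the kernel `(v - w)⁻¹` of the resolvent identity is continuous on the
product of the two circles. -/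
lemma riesz_idempotent {z : ℂ} {r s : ℝ} (hr : 0 < r) (hrs : r < s)
    (h : closedBall z s \ {z} ⊆ resolventSet ℂ a) :
    (∮ w in C(z, r), resolvent a w) * (∮ w in C(z, r), resolvent a w) =
      (2 * π * I : ℂ) • ∮ w in C(z, r), resolvent a w := by
  have hs : 0 < s := hr.trans hrs
  have hSr : sphere z r ⊆ resolventSet ℂ a := fun w hw => h
    ⟨closedBall_subset_closedBall hrs.le (sphere_subset_closedBall hw), ne_of_mem_sphere hw hr.ne'⟩
  have hSs : sphere z s ⊆ resolventSet ℂ a := fun w hw => h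
    ⟨sphere_subset_closedBall hw, ne_of_mem_sphere hw hs.ne'⟩
  have hne : ∀ w ∈ closedBall z r, ∀ v ∈ sphere z s, v ≠ w := by
    rintro w hw v hv rfl
    rw [mem_closedBall] at hw
    rw [mem_sphere] at hv
    linarith
  have hcr := continuousOn_resolvent hSr
  have hcs := continuousOn_resolvent hSs
  have hrad : ∮ w in C(z, r), resolvent a w = ∮ w in C(z, s), resolvent a w := by
    refine (circleIntegral_eq_of_differentiable_on_annulus_off_countable hr hrs.le
      countable_empty (continuousOn_resolvent ?_) ?_).symm
    · rintro w ⟨hw, hw'⟩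
      exact h ⟨hw, fun e => hw' (by rw [mem_singleton_iff] at e; rw [e]; exact mem_ball_self hr)⟩
    · rintro w ⟨⟨hw, hw'⟩, -⟩
      refine (spectrum.hasDerivAt_resolvent_const_left (h
        ⟨ball_subset_closedBall hw, fun e => hw' ?_⟩)).differentiableAt
      rw [mem_singleton_iff] at e; rw [e]; exact mem_closedBall_self hr.le
  have hk : ContinuousOn (fun p : ℂ × ℂ => (p.2 - p.1)⁻¹) (sphere z r ×ˢ sphere z s) := by
    refine (by fun_prop : Continuous fun p : ℂ × ℂ => p.2 - p.1).continuousOn.inv₀ ?_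
    rintro ⟨w, v⟩ ⟨hw, hv⟩
    exact sub_ne_zero.2 (hne w (sphere_subset_closedBall hw) v hv)
  have hkw : ∀ w ∈ sphere z r, ContinuousOn (fun v => (v - w)⁻¹) (sphere z s) := fun w hw =>
    (by fun_prop : Continuous fun v : ℂ => v - w).continuousOn.inv₀ fun v hv =>
      sub_ne_zero.2 (hne w (sphere_subset_closedBall hw) v hv)
  have hF : ContinuousOn (Function.uncurry fun w v : ℂ => (v - w)⁻¹ • resolvent a v)
      (sphere z r ×ˢ sphere z s) :=
    hk.smul (hcs.comp continuousOn_snd fun p hp => hp.2)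
  -- For `v` on the outer circle, `w ↦ (v - w)⁻¹` is holomorphic on the inner disc.
  have hzero : ∮ w in C(z, r), ∮ v in C(z, s), (v - w)⁻¹ • resolvent a v = 0 := by
    rw [circleIntegral_swap hr.le hs.le hF]
    have : EqOn (fun v => ∮ w in C(z, r), (v - w)⁻¹ • resolvent a v) (fun _ => (0 : A))
        (sphere z s) := by
      intro v hv
      simp only
      rw [circleIntegral.integral_smul_const,
        circleIntegral_eq_zero_of_differentiable_on_off_countable hr.le countable_empty,
        zero_smul]
      · exact (by fun_prop : Continuous fun w : ℂ => v - w).continuousOn.inv₀ fun w hw =>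
          sub_ne_zero.2 (hne w hw v hv)
      · intro w hw
        exact (by fun_prop : DifferentiableAt ℂ (fun w : ℂ => v - w) w).inv
          (sub_ne_zero.2 (hne w (ball_subset_closedBall hw.1) v hv))
    rw [circleIntegral.integral_congr hs.le this]
    simp [circleIntegral]
  have hinner : EqOn (fun w => resolvent a w * ∮ v in C(z, s), resolvent a v)
      (fun w => (2 * π * I : ℂ) • resolvent a w -
        ∮ v in C(z, s), (v - w)⁻¹ • resolvent a v) (sphere z r) := by
    intro w hw
    have e1 : resolvent a w * ∮ v in C(z, s), resolvent a v =
        ∮ v in C(z, s), resolvent a w * resolvent a v :=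
      (clm_circleIntegral (ContinuousLinearMap.mul ℂ A (resolvent a w)) hs.le hcs).symm
    simp only
    rw [e1, circleIntegral.integral_congr hs.le (g := fun v =>
      (v - w)⁻¹ • resolvent a w - (v - w)⁻¹ • resolvent a v) fun v hv =>
        resolvent_mul_resolvent (hSr hw) (hSs hv) (hne w (sphere_subset_closedBall hw) v hv),
      circleIntegral.integral_sub, circleIntegral.integral_smul_const,
      circleIntegral.integral_sub_inv_of_mem_ball]
    · rw [mem_ball, mem_sphere.1 hw]; exact hrs
    · exact ((hkw w hw).smul continuousOn_const).circleIntegrable hs.le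
    · exact ((hkw w hw).smul hcs).circleIntegrable hs.le
  have hG : ContinuousOn (fun w => resolvent a w * ∮ v in C(z, s), resolvent a v) (sphere z r) :=
    hcr.mul continuousOn_const
  have hH : ContinuousOn (fun w => ∮ v in C(z, s), (v - w)⁻¹ • resolvent a v) (sphere z r) := by
    refine ((hcr.const_smul (2 * π * I : ℂ)).sub hG).congr fun w hw => ?_
    have := hinner hw
    simp only at this
    simp [this]
  calc (∮ w in C(z, r), resolvent a w) * (∮ w in C(z, r), resolvent a w)
      = (∮ w in C(z, r), resolvent a w) * (∮ v in C(z, s), resolvent a v) := by rw [← hrad]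
    _ = ∮ w in C(z, r), resolvent a w * ∮ v in C(z, s), resolvent a v :=
      (clm_circleIntegral ((ContinuousLinearMap.mul ℂ A).flip (∮ v in C(z, s), resolvent a v))
        hr.le hcr).symm
    _ = _ := by
      rw [circleIntegral.integral_congr hr.le hinner, circleIntegral.integral_sub, hzero, sub_zero,
        circleIntegral.integral_smul]
      · exact (hcr.const_smul (2 * π * I : ℂ)).circleIntegrable hr.le
      · exact hH.circleIntegrable hr.le

lemma commute_circleIntegral {f : ℂ → A} {z : ℂ} {r : ℝ} (hr : 0 ≤ r)
    (hf : ContinuousOn f (sphere z r)) {x : A} (hx : ∀ w ∈ sphere z r, Commute x (f w)) :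
    Commute x (∮ w in C(z, r), f w) := by
  have e1 := clm_circleIntegral (ContinuousLinearMap.mul ℂ A x) hr hf
  have e2 := clm_circleIntegral ((ContinuousLinearMap.mul ℂ A).flip x) hr hf
  simp only [ContinuousLinearMap.mul_apply', ContinuousLinearMap.flip_apply] at e1 e2
  rw [commute_iff_eq, ← e1, ← e2]
  exact circleIntegral.integral_congr hr fun w hw => hx w hw

/-- If `z` is not an accumulation point of the spectrum of `a` and `z - T a` is invertible, then
`z - a` is `T`-Browder. -/
lemma exists_browder_decomposition {B : Type*} [NormedRing B] [NormedAlgebra ℂ B] [CompleteSpace B]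
    (T : A →ₐ[ℂ] B) (hT : Continuous T) {z : ℂ} {s : ℝ} (hs : 0 < s)
    (h : closedBall z s \ {z} ⊆ resolventSet ℂ a) (hB : z ∈ resolventSet ℂ (T a)) :
    ∃ c d : A, algebraMap ℂ A z - a = c + d ∧ T c = 0 ∧ IsUnit d ∧ c * d = d * c := by
  obtain ⟨r, hr, hrs⟩ := exists_between hs
  have hSr : sphere z r ⊆ resolventSet ℂ a := fun w hw => h
    ⟨closedBall_subset_closedBall hrs.le (sphere_subset_closedBall hw), ne_of_mem_sphere hw hr.ne'⟩
  have hcr := continuousOn_resolvent hSr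
  have hki : ContinuousOn (fun w => (w - z)⁻¹) (sphere z r) :=
    (by fun_prop : Continuous fun w : ℂ => w - z).continuousOn.inv₀ fun w hw =>
      sub_ne_zero.2 (ne_of_mem_sphere hw hr.ne')
  have hk : ContinuousOn (fun w => (w - z)⁻¹ • resolvent a w) (sphere z r) := hki.smul hcr
  have h2pi : (2 * π * I : ℂ) ≠ 0 := two_pi_I_ne_zero
  set P : A := ∮ w in C(z, r), resolvent a w with hP
  set Q : A := ∮ w in C(z, r), (w - z)⁻¹ • resolvent a w with hQ
  set x : A := algebraMap ℂ A z - a with hx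
  have hxa : Commute x a := Commute.sub_left (Algebra.commutes z a) rfl
  have hxP : Commute x P := commute_circleIntegral hr.le hcr fun w _ => hxa.resolvent_right w
  have hxQ : Commute x Q := commute_circleIntegral hr.le hk fun w _ =>
    (hxa.resolvent_right w).smul_right _
  have haQ : Commute a Q := commute_circleIntegral hr.le hk fun w _ =>
    ((Commute.refl a).resolvent_right w).smul_right _
  have hQP : Commute Q P := commute_circleIntegral hr.le hcr fun w _ => haQ.symm.resolvent_right w
  have hPP : P * P = (2 * π * I : ℂ) • P := riesz_idempotent hr hrs h
  -- On the circle, `x (w - a)⁻¹ = 1 - (w - z) (w - a)⁻¹`.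
  have hxQ1 : x * Q = (2 * π * I : ℂ) • 1 - P := by
    have e1 : ∮ w in C(z, r), x * ((w - z)⁻¹ • resolvent a w) = x * Q :=
      clm_circleIntegral (ContinuousLinearMap.mul ℂ A x) hr.le hk
    rw [← e1, circleIntegral.integral_congr hr.le
      (g := fun w => (w - z)⁻¹ • (1 : A) - resolvent a w),
      circleIntegral.integral_sub, circleIntegral.integral_smul_const,
      circleIntegral.integral_sub_center_inv _ hr.ne']
    · exact (hki.smul continuousOn_const).circleIntegrable hr.le
    · exact hcr.circleIntegrable hr.le
    · intro w hw
      have hwz : w - z ≠ 0 := sub_ne_zero.2 (ne_of_mem_sphere hw hr.ne')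
      have : x = (algebraMap ℂ A w - a) - algebraMap ℂ A (w - z) := by
        rw [hx, map_sub]; abel
      simp only
      rw [this, mul_smul_comm, sub_mul, sub_mul_resolvent (hSr hw), ← Algebra.smul_def, smul_sub,
        smul_smul, inv_mul_cancel₀ hwz, one_smul]
  set p : A := (2 * π * I : ℂ)⁻¹ • P with hp
  set b : A := (2 * π * I : ℂ)⁻¹ • Q with hb
  have hpp : p * p = p := by
    rw [hp, smul_mul_smul_comm, hPP, smul_smul, mul_assoc, inv_mul_cancel₀ h2pi, mul_one]
  have hxb : x * b = 1 - p := by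
    rw [hb, mul_smul_comm, hxQ1, smul_sub, smul_smul, inv_mul_cancel₀ h2pi, one_smul]
  have hxp : x * p = p * x := (hxP.smul_right _).eq
  have hbx : b * x = 1 - p := by rw [← hxb]; exact (hxQ.smul_right _).eq.symm
  have hbp : b * p = p * b := ((hQP.smul_left _).smul_right _).eq
  have hTp : T p = 0 := by
    -- The integrand `resolvent (T a)` is holomorphic on the whole disc.
    have hball : closedBall z s ⊆ resolventSet ℂ (T a) := fun w hw => by
      by_cases e : w = z
      · rwa [e]
      · exact AlgHom.mem_resolventSet_apply T (h ⟨hw, e⟩)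
    have e1 : ∮ w in C(z, r), T (resolvent a w) = T P :=
      clm_circleIntegral (⟨T.toLinearMap, hT⟩ : A →L[ℂ] B) hr.le hcr
    rw [hp, map_smul, ← e1, circleIntegral.integral_congr hr.le
      (g := fun w => resolvent (T a) w) fun w hw => AlgHom.map_resolvent T (hSr hw),
      circleIntegral_eq_zero_of_differentiable_on_off_countable hr.le countable_empty, smul_zero]
    · exact continuousOn_resolvent ((closedBall_subset_closedBall hrs.le).trans hball)
    · intro w hw
      exact (spectrum.hasDerivAt_resolvent_const_left (hball (closedBall_subset_closedBall hrs.le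
        (ball_subset_closedBall hw.1)))).differentiableAt
  clear_value x p b
  have hpq : (1 - p) * p = 0 := by rw [sub_mul, one_mul, hpp, sub_self]
  have hqp : p * (1 - p) = 0 := by rw [mul_sub, mul_one, hpp, sub_self]
  have hqq : (1 - p) * (1 - p) = 1 - p := by rw [mul_sub, mul_one, hpq, sub_zero]
  have hxq : (1 - p) * x = x * (1 - p) := by rw [sub_mul, mul_sub, hxp, one_mul, mul_one]
  have hbq : (1 - p) * b = b * (1 - p) := by rw [sub_mul, mul_sub, hbp, one_mul, mul_one]
  have hinv : ∀ u v : A, u * v = 1 - p → (1 - p) * v = v * (1 - p) →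
      (u * (1 - p) + p) * (v * (1 - p) + p) = 1 := by
    intro u v huv hv
    have e1 : u * (1 - p) * (v * (1 - p)) = 1 - p := by
      rw [mul_assoc, ← mul_assoc (1 - p), hv, mul_assoc v, hqq, ← mul_assoc, huv, hqq]
    have e2 : p * (v * (1 - p)) = 0 := by rw [← hv, ← mul_assoc, hqp, zero_mul]
    have e3 : u * (1 - p) * p = 0 := by rw [mul_assoc, hpq, mul_zero]
    rw [add_mul, mul_add, mul_add, e1, e2, e3, hpp]
    abel
  have hxc : Commute x p := hxp
  refine ⟨(x - 1) * p, x * (1 - p) + p, by noncomm_ring, by rw [map_mul, hTp, mul_zero],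
    ⟨⟨_, b * (1 - p) + p, hinv x b hxb hbq, hinv b x hbx hxq⟩, rfl⟩, ?_⟩
  have c1 : Commute (x - 1) x := (Commute.refl x).sub_left (Commute.one_left x)
  have c2 : Commute (x - 1) p := hxc.sub_left (Commute.one_left p)
  have c3 : Commute (x - 1) (1 - p) := (Commute.one_right _).sub_right c2
  have c4 : Commute p (1 - p) := (Commute.one_right _).sub_right rfl
  exact (((c1.mul_right c3).add_right c2).mul_left
    ((hxc.symm.mul_right c4).add_right rfl)).eq

end Resolvent

/-! ### Accumulation points of plane compact sets -/

open Metric Set Topology in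
/-- If every frontier point of a compact plane set `K` outside the finite set `Ω` is isolated
in `K`, then `K` accumulates only at points of `Ω`. -/
lemma not_mem_acc_of_frontier {K Ω : Set ℂ} (hK : IsCompact K) (hΩ : Ω.Finite)
    (h : frontier K ⊆ Ω ∪ (K \ {z : ℂ | z ∈ closure (K \ {z})})) {z : ℂ} (hz : z ∉ Ω) :
    z ∉ closure (K \ {z}) := by
  have hU : IsPreconnected Ωᶜ :=
    (hΩ.countable.isConnected_compl_of_one_lt_rank (by simp)).isPreconnected
  have hclos : closure (interior K) ∩ Ωᶜ ⊆ interior K := by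
    rintro x ⟨hx, hxΩ⟩
    by_contra hxi
    have hxK : x ∈ closure K := closure_mono interior_subset hx
    rcases h ⟨hxK, hxi⟩ with h1 | h1
    · exact hxΩ h1
    · have hsub : interior K ⊆ K \ {x} := fun y hy =>
        ⟨interior_subset hy, fun e => hxi (by rw [mem_singleton_iff] at e; exact e ▸ hy)⟩
      exact h1.2 (closure_mono hsub hx)
  have hempty : ¬ (Ωᶜ ∩ interior K).Nonempty := by
    intro hne
    have hsub := hU.subset_of_closure_inter_subset isOpen_interior hne hclos
    refine NormedSpace.unbounded_univ ℝ ℂ ((hΩ.isBounded.union hK.isBounded).subset fun x _ => ?_)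
    by_cases hx : x ∈ Ω
    · exact .inl hx
    · exact .inr (interior_subset (hsub hx))
  intro hacc
  have hzK : z ∈ closure K := closure_mono sdiff_subset hacc
  rcases h ⟨hzK, fun hi => hempty ⟨z, hz, hi⟩⟩ with h1 | h1
  · exact hz h1
  · exact h1.2 hacc

/-! ### Generalized and polynomially Riesz elements -/

/-- If `T` has the strong Riesz property, then the generalized `T`-Riesz elements
coincide with the polynomially `T`-Riesz elements. -/
theorem generalized_tRiesz_iff_polyTRiesz
    {A B : Type*}
    [NormedRing A] [StarRing A] [CStarRing A] [NormedAlgebra ℂ A]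
    [CompleteSpace A] [StarModule ℂ A] [Nontrivial A]
    [NormedRing B] [StarRing B] [CStarRing B] [NormedAlgebra ℂ B]
    [CompleteSpace B] [StarModule ℂ B] [Nontrivial B]
    (T : A →ₐ[ℂ] B) (hTcont : Continuous T)
    (hStrongRiesz : ∀ x : A, frontier (spectrum ℂ x) ⊆
      spectrum ℂ (T x) ∪
        (spectrum ℂ x \ {z : ℂ | z ∈ closure (spectrum ℂ x \ {z})}))
    (a : A) :
    (∃ Ω : Set ℂ, Ω.Finite ∧
        spectrum ℂ (T a) = Ω ∧
        {z : ℂ | ¬ ∃ c d : A,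
          algebraMap ℂ A z - a = c + d ∧ T c = 0 ∧ IsUnit d} = Ω ∧
        {z : ℂ | ¬ ∃ c d : A,
          algebraMap ℂ A z - a = c + d ∧ T c = 0 ∧ IsUnit d ∧ c * d = d * c} = Ω) ↔
      (∃ P : Polynomial ℂ, P ≠ 0 ∧
        spectrum ℂ (T (Polynomial.aeval a P)) ⊆ {0}) := by
  constructor
  · rintro ⟨Ω, hΩ, hσ, -, -⟩
    refine ⟨∏ l ∈ hΩ.toFinset, (Polynomial.X - Polynomial.C l),
      Finset.prod_ne_zero_iff.2 fun l _ => Polynomial.X_sub_C_ne_zero l, ?_⟩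
    rw [← Polynomial.aeval_algHom_apply, spectrum.map_polynomial_aeval]
    rintro _ ⟨l, hl, rfl⟩
    simp only [Set.mem_singleton_iff, Polynomial.eval_prod]
    exact Finset.prod_eq_zero (i := l) (by rwa [Set.Finite.mem_toFinset, ← hσ]) (by simp)
  · rintro ⟨P, hP, hPT⟩
    have hfin : (spectrum ℂ (T a)).Finite := by
      refine (P.rootSet_finite ℂ).subset fun l hl => ?_
      rw [← Polynomial.aeval_algHom_apply] at hPT
      have := hPT (spectrum.subset_polynomial_aeval (T a) P ⟨l, hl, rfl⟩)
      rw [Polynomial.mem_rootSet]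
      exact ⟨hP, by simpa [Polynomial.aeval_def, Polynomial.eval₂_eq_eval_map] using this⟩
    have hWeyl : ∀ z : ℂ, (∃ c d : A, algebraMap ℂ A z - a = c + d ∧ T c = 0 ∧ IsUnit d) →
        z ∉ spectrum ℂ (T a) := by
      rintro z ⟨c, d, hcd, hc, hd⟩ hz
      refine hz (?_ : IsUnit (algebraMap ℂ B z - T a))
      have : algebraMap ℂ B z - T a = T d := by
        rw [← T.commutes, ← map_sub, hcd, map_add, hc, zero_add]
      rw [this]
      exact hd.map T
    have hBrowder : ∀ z : ℂ, z ∉ spectrum ℂ (T a) → ∃ c d : A,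
        algebraMap ℂ A z - a = c + d ∧ T c = 0 ∧ IsUnit d ∧ c * d = d * c := by
      intro z hz
      have hacc := not_mem_acc_of_frontier (spectrum.isCompact a) hfin (hStrongRiesz a) hz
      obtain ⟨s, hs, hsub⟩ := Metric.nhds_basis_closedBall.mem_iff.1
        (isClosed_closure.isOpen_compl.mem_nhds hacc)
      refine exists_browder_decomposition T hTcont hs (fun w hw => ?_) (not_not.1 hz)
      by_contra hwσ
      exact hsub hw.1 (subset_closure ⟨hwσ, hw.2⟩)
    refine ⟨_, hfin, rfl, Set.ext fun z => ⟨fun h => ?_, fun hz h => hWeyl z h hz⟩,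
      Set.ext fun z => ⟨fun h => not_not.1 fun hz => h (hBrowder z hz), fun hz h => ?_⟩⟩
    · refine not_not.1 fun hz => h ?_
      obtain ⟨c, d, h1, h2, h3, -⟩ := hBrowder z hz
      exact ⟨c, d, h1, h2, h3⟩
    · obtain ⟨c, d, h1, h2, h3, -⟩ := h
      exact hWeyl z ⟨c, d, h1, h2, h3⟩ hz
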